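/- arXiv:2211.09094 — 2 statements merged into one kernel-verified Lean document; each statement's English description precedes it below -/
import Mathlib

section
/- Fix an integer m ≥ 1. There exists a constant C_m > 0 such that for all n ≥ 1, |S_{n,m} − H_m·H_n − Σ_{j=1}^{m−1} (1/j)·ln C(m,j)| ≤ C_m · n^{−1/m}, where H_k = 1 + 1/2 + ... + 1/k denotes the k-th harmonic number and C(m,j) is the binomial coefficient. -/
open Finset

/-- The maximum entry of a tuple `j : Fin n → Fin (m+1)`, as a natural number. -/
def maxEntry {n m : ℕ} (j : Fin n → Fin (m + 1)) : ℕ :=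
  Finset.univ.sup (fun i => (j i : ℕ))

/-- Expected value of `max_i X_i(t)` for the multivariate hypergeometric counts. -/
noncomputable def expMaxHyper (n m t : ℕ) : ℝ :=
  ∑ j ∈ univ.filter (fun j : Fin n → Fin (m + 1) => ∑ i, (j i : ℕ) = t),
    ((∏ i, (Nat.choose m (j i : ℕ) : ℝ)) / (Nat.choose (n * m) t : ℝ)) * (maxEntry j : ℝ)

/-- `S n m`: expected number of correct guesses under the optimal strategy. -/
noncomputable def S (n m : ℕ) : ℝ :=
  ∑ t ∈ Finset.Icc 1 (n * m), expMaxHyper n m t / t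

/-- The `k`-th harmonic number `H_k = 1 + 1/2 + ⋯ + 1/k`. -/
noncomputable def harmonicNum (k : ℕ) : ℝ :=
  ∑ i ∈ Finset.Icc 1 k, (1 : ℝ) / i

open Polynomial intervalIntegral

/-- The Beta integral at positive integers. -/
lemma integral_pow_mul_one_sub_pow (a b : ℕ) :
    ∫ p in (0 : ℝ)..1, p ^ a * (1 - p) ^ b =
      (a.factorial * b.factorial : ℝ) / (a + b + 1).factorial := by
  induction b generalizing a with
  | zero =>
    rw [Nat.add_zero, Nat.factorial_succ]
    have := Nat.factorial_ne_zero a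
    push_cast
    simp
    field_simp
  | succ b ih =>
    have hderiv : ∀ p ∈ Set.uIcc (0 : ℝ) 1,
        HasDerivAt (fun p : ℝ => p ^ (a + 1) * (1 - p) ^ (b + 1))
          ((a + 1) * (p ^ a * (1 - p) ^ (b + 1)) - (b + 1) * (p ^ (a + 1) * (1 - p) ^ b)) p := by
      intro p _
      have h := (hasDerivAt_pow (a + 1) p).mul (((hasDerivAt_id p).const_sub 1).pow (b + 1))
      refine h.congr_deriv ?_
      simp only [Nat.add_sub_cancel, id, Nat.cast_add, Nat.cast_one, Pi.pow_apply]
      ring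
    have h := integral_eq_sub_of_hasDerivAt hderiv
      (Continuous.intervalIntegrable (by fun_prop) _ _)
    rw [integral_sub (Continuous.intervalIntegrable (by fun_prop) _ _)
      (Continuous.intervalIntegrable (by fun_prop) _ _), integral_const_mul, integral_const_mul,
      ih (a + 1)] at h
    have e : a + 1 + b + 1 = a + (b + 1) + 1 := by ring
    rw [e, Nat.factorial_succ a] at h
    rw [Nat.factorial_succ b]
    have hf : ((a + (b + 1) + 1).factorial : ℝ) ≠ 0 := by positivity
    have ha : (a + 1 : ℝ) ≠ 0 := by positivity
    simp at h
    push_cast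
    apply mul_left_cancel₀ ha
    rw [sub_eq_zero.mp h]
    ring

lemma integral_pow_mul_one_sub_pow_eq_inv_choose {N t : ℕ} (ht : 1 ≤ t) (htN : t ≤ N) :
    ∫ p in (0 : ℝ)..1, p ^ (t - 1) * (1 - p) ^ (N - t) = 1 / ((N.choose t : ℝ) * t) := by
  rw [integral_pow_mul_one_sub_pow, Nat.cast_choose ℝ htN]
  obtain ⟨s, rfl⟩ := Nat.exists_eq_add_of_le' ht
  have e : s + 1 - 1 + (N - (s + 1)) + 1 = N := by omega
  rw [e, Nat.add_sub_cancel, Nat.factorial_succ]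
  have h1 := Nat.factorial_ne_zero s
  have h2 := Nat.factorial_ne_zero N
  have h3 := Nat.factorial_ne_zero (N - (s + 1))
  have h4 : (s + 1 : ℝ) ≠ 0 := by positivity
  push_cast
  field_simp

lemma integral_one_sub_pow_pow_le {m n : ℕ} (hm : 1 ≤ m) (hn : 1 ≤ n) :
    ∫ p in (0 : ℝ)..1, (1 - p ^ m) ^ n ≤
      Real.Gamma (1 / m + 1) * (n : ℝ) ^ (-(1 : ℝ) / m) := by
  have hm' : (0 : ℝ) < m := by exact_mod_cast hm
  have hn' : (0 : ℝ) < n := by exact_mod_cast hn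
  have hint : MeasureTheory.IntegrableOn (fun x : ℝ => Real.exp (-n * x ^ (m : ℝ)))
      (Set.Ioi 0) := by
    simpa using integrableOn_rpow_mul_exp_neg_mul_rpow (s := 0) (by norm_num) hm' hn'
  rw [mul_comm, ← integral_exp_neg_mul_rpow hm' hn', integral_of_le zero_le_one]
  refine (MeasureTheory.setIntegral_mono_on ?_ (hint.mono_set Set.Ioc_subset_Ioi_self)
    measurableSet_Ioc ?_).trans
    (MeasureTheory.setIntegral_mono_set hint (.of_forall fun _ => (Real.exp_pos _).le)
      Set.Ioc_subset_Ioi_self.eventuallyLE)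
  · rw [← intervalIntegrable_iff_integrableOn_Ioc_of_le zero_le_one]
    exact Continuous.intervalIntegrable (by fun_prop) _ _
  · intro x hx
    have h1 : x ^ m ≤ 1 := pow_le_one₀ hx.1.le hx.2
    rw [Real.rpow_natCast, neg_mul, ← mul_neg, Real.exp_nat_mul]
    exact pow_le_pow_left₀ (by linarith) (Real.one_sub_le_exp_neg _) n

lemma integral_geom_sum_comp_mul_deriv (P : ℝ[X]) (h0 : P.eval 0 = 0) (h1 : P.eval 1 = 1)
    (n : ℕ) :
    ∫ p in (0 : ℝ)..1, (∑ i ∈ range n, (1 - P.eval p) ^ i) * P.derivative.eval p =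
      harmonicNum n := by
  have h := integral_comp_mul_deriv (a := 0) (b := 1) (g := fun u => ∑ i ∈ range n, (1 - u) ^ i)
    (fun x _ => P.hasDerivAt x) (by fun_prop) (by fun_prop)
  simp only [Function.comp_def, h0, h1] at h
  rw [h, integral_finsetSum fun i _ => Continuous.intervalIntegrable (by fun_prop) _ _,
    harmonicNum, Finset.range_eq_Ico, ← Finset.Ico_add_one_right_eq_Icc,
    Finset.sum_Ico_eq_sum_range, Finset.sum_Ico_eq_sum_range]
  refine Finset.sum_congr (by simp) fun i _ => ?_
  rw [integral_comp_sub_left (fun x => x ^ (0 + i)) 1]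
  simp [add_comm]

lemma abs_integral_sub_le (Q : ℝ[X]) {k : ℕ} (hk : 1 ≤ k) (hQ1 : Q.eval 1 = 1)
    (hQ : ∀ p ∈ Set.Icc (0 : ℝ) 1, 1 ≤ Q.eval p)
    (hQ' : ∀ p ∈ Set.Icc (0 : ℝ) 1, p ^ k * Q.eval p ≤ 1) :
    ∃ M : ℝ, 0 ≤ M ∧ ∀ n : ℕ,
      |(∫ p in (0 : ℝ)..1, p ^ (k - 1) * Q.eval p * ∑ i ∈ range n, (1 - p ^ k * Q.eval p) ^ i) -
        1 / k * harmonicNum n - 1 / k * Real.log (Q.eval 0)| ≤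
      M * ∫ p in (0 : ℝ)..1, (1 - p ^ k) ^ n := by
  have hk' : (k : ℝ) ≠ 0 := by positivity
  have huIcc : Set.uIcc (0 : ℝ) 1 = Set.Icc 0 1 := Set.uIcc_of_le zero_le_one
  have hne : ∀ p ∈ Set.uIcc (0 : ℝ) 1, Q.eval p ≠ 0 := fun p hp =>
    (zero_lt_one.trans_le (hQ p (huIcc ▸ hp))).ne'
  obtain ⟨M, hM⟩ := isCompact_Icc.exists_bound_of_continuousOn (s := Set.Icc (0 : ℝ) 1)
    (f := fun p => Q.derivative.eval p) (by fun_prop)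
  have hM0 : 0 ≤ M := (norm_nonneg _).trans (hM 0 (by simp))
  refine ⟨1 / k * M, by positivity, fun n => ?_⟩
  set w : ℝ → ℝ := fun p => ∑ i ∈ range n, (1 - p ^ k * Q.eval p) ^ i
  have hcontL : ContinuousOn (fun p => Q.derivative.eval p / Q.eval p) (Set.uIcc 0 1) :=
    ContinuousOn.div (by fun_prop) (by fun_prop) hne
  have hcontE : ContinuousOn (fun p => Q.derivative.eval p / Q.eval p *
      (1 - p ^ k * Q.eval p) ^ n) (Set.uIcc 0 1) := hcontL.mul (by fun_prop)
  have hlog : ∫ p in (0 : ℝ)..1, Q.derivative.eval p / Q.eval p = - Real.log (Q.eval 0) := by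
    rw [integral_eq_sub_of_hasDerivAt (fun p hp => (Q.hasDerivAt p).log (hne p hp))
      hcontL.intervalIntegrable, hQ1, Real.log_one, zero_sub]
  have hharm := integral_geom_sum_comp_mul_deriv (X ^ k * Q) (by simp; omega) (by simp [hQ1]) n
  have hsplit : ∫ p in (0 : ℝ)..1, p ^ (k - 1) * Q.eval p * w p =
      1 / k * ((harmonicNum n - - Real.log (Q.eval 0)) +
        ∫ p in (0 : ℝ)..1, Q.derivative.eval p / Q.eval p * (1 - p ^ k * Q.eval p) ^ n) := by
    rw [← hharm, ← hlog, ← integral_sub (Continuous.intervalIntegrable (by fun_prop) _ _)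
      hcontL.intervalIntegrable, ← integral_add
        ((Continuous.intervalIntegrable (by fun_prop) _ _).sub hcontL.intervalIntegrable)
        hcontE.intervalIntegrable, ← integral_const_mul]
    refine integral_congr fun p hp => ?_
    have hg : w p * (p ^ k * Q.eval p) = 1 - (1 - p ^ k * Q.eval p) ^ n := by
      simpa using geom_sum_mul_neg (1 - p ^ k * Q.eval p) n
    have hp0 := hne p hp
    have hpow : p ^ k = p * p ^ (k - 1) := by rw [← pow_succ', Nat.sub_add_cancel hk]
    have hE : (1 - p ^ k * Q.eval p) ^ n = 1 - w p * (p ^ k * Q.eval p) := by linarith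
    simp only [eval_mul, eval_pow, eval_X, derivative_mul, derivative_X_pow, eval_add, eval_C,
      hE]
    change _ = 1 / (k : ℝ) * (w p * _ - _ + _)
    field_simp
    ring
  rw [hsplit]
  have hbound : |∫ p in (0 : ℝ)..1, Q.derivative.eval p / Q.eval p *
      (1 - p ^ k * Q.eval p) ^ n| ≤ ∫ p in (0 : ℝ)..1, M * (1 - p ^ k) ^ n := by
    rw [← Real.norm_eq_abs]
    refine norm_integral_le_of_norm_le zero_le_one (.of_forall fun p hp => ?_)
      (Continuous.intervalIntegrable (by fun_prop) _ _)
    have hp' := Set.Ioc_subset_Icc_self hp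
    have h1 := hQ p hp'
    have h2 := hQ' p hp'
    have h3 : p ^ k ≤ p ^ k * Q.eval p := le_mul_of_one_le_right (pow_nonneg hp'.1 k) h1
    rw [norm_mul, norm_div, norm_pow]
    refine mul_le_mul ?_ (pow_le_pow_left₀ (norm_nonneg _) ?_ n) (by positivity) hM0
    · refine (div_le_self (norm_nonneg _) ?_).trans (hM p hp')
      exact h1.trans (le_abs_self _)
    · rw [Real.norm_of_nonneg (by linarith)]
      linarith
  rw [integral_const_mul] at hbound
  have e : ∀ E : ℝ, 1 / (k : ℝ) * ((harmonicNum n - - Real.log (Q.eval 0)) + E) -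
      1 / k * harmonicNum n - 1 / k * Real.log (Q.eval 0) = 1 / k * E := fun E => by ring
  rw [e, abs_mul, abs_of_nonneg (by positivity : (0 : ℝ) ≤ 1 / k), mul_assoc]
  gcongr

lemma sum_choose_mul_pow_mul_one_sub_pow (m : ℕ) (p : ℝ) :
    ∑ i ∈ range (m + 1), (m.choose i : ℝ) * p ^ i * (1 - p) ^ (m - i) = 1 := by
  have h := add_pow p (1 - p) m
  rw [add_sub_cancel, one_pow] at h
  refine Eq.trans ?_ h.symm
  exact Finset.sum_congr rfl fun i _ => by ring

/-- The polynomial `Q` with `p ^ k * Q(p) = ℙ(Bin(m, p) ≥ k)`. -/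
noncomputable def binomialTailQuotient (m k : ℕ) : ℝ[X] :=
  ∑ i ∈ range (m - k + 1), C (m.choose (k + i) : ℝ) * X ^ i * (1 - X) ^ (m - k - i)

lemma eval_binomialTailQuotient (m k : ℕ) (p : ℝ) :
    (binomialTailQuotient m k).eval p =
      ∑ i ∈ range (m - k + 1), (m.choose (k + i) : ℝ) * p ^ i * (1 - p) ^ (m - k - i) := by
  simp [binomialTailQuotient, eval_finsetSum]

lemma eval_zero_binomialTailQuotient (m k : ℕ) :
    (binomialTailQuotient m k).eval 0 = m.choose k := by
  rw [eval_binomialTailQuotient, Finset.sum_range_succ']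
  simp

lemma eval_one_binomialTailQuotient {m k : ℕ} (hk : k ≤ m) :
    (binomialTailQuotient m k).eval 1 = 1 := by
  rw [eval_binomialTailQuotient, Finset.sum_range_succ, Finset.sum_eq_zero]
  · simp [Nat.add_sub_cancel' hk]
  · intro i hi
    have : m - k - i ≠ 0 := by have := Finset.mem_range.mp hi; omega
    simp [this]

lemma one_le_eval_binomialTailQuotient {m k : ℕ} (hk : k ≤ m) {p : ℝ} (hp : p ∈ Set.Icc (0 : ℝ) 1) :
    1 ≤ (binomialTailQuotient m k).eval p := by
  rw [eval_binomialTailQuotient]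
  refine (sum_choose_mul_pow_mul_one_sub_pow (m - k) p).symm.le.trans ?_
  refine Finset.sum_le_sum fun i hi => ?_
  have hi' : i ≤ m - k := by have := Finset.mem_range.mp hi; omega
  have hc : (m - k).choose i ≤ m.choose (k + i) := by
    rw [← Nat.choose_symm hi', ← Nat.choose_symm (by omega : k + i ≤ m), Nat.sub_sub]
    exact Nat.choose_le_choose _ (Nat.sub_le _ _)
  have h0 : 0 ≤ p ^ i * (1 - p) ^ (m - k - i) :=
    mul_nonneg (pow_nonneg hp.1 _) (pow_nonneg (by linarith [hp.2]) _)
  rw [mul_assoc, mul_assoc]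
  gcongr

lemma sum_range_add_pow_mul_eval_binomialTailQuotient {m k : ℕ} (hk : k ≤ m) (p : ℝ) :
    (∑ i ∈ range k, (m.choose i : ℝ) * p ^ i * (1 - p) ^ (m - i)) +
      p ^ k * (binomialTailQuotient m k).eval p = 1 := by
  refine Eq.trans ?_ (sum_choose_mul_pow_mul_one_sub_pow m p)
  rw [show m + 1 = k + (m - k + 1) by omega,
    Finset.sum_range_add, eval_binomialTailQuotient, Finset.mul_sum]
  congr 1
  refine Finset.sum_congr rfl fun i _ => ?_
  rw [Nat.sub_sub, pow_add]
  ring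

lemma pow_mul_eval_binomialTailQuotient_le_one {m k : ℕ} (hk : k ≤ m) {p : ℝ}
    (hp : p ∈ Set.Icc (0 : ℝ) 1) : p ^ k * (binomialTailQuotient m k).eval p ≤ 1 := by
  have h := sum_range_add_pow_mul_eval_binomialTailQuotient hk p
  have h0 : 0 ≤ ∑ i ∈ range k, (m.choose i : ℝ) * p ^ i * (1 - p) ^ (m - i) :=
    Finset.sum_nonneg fun i _ => mul_nonneg (mul_nonneg (Nat.cast_nonneg _) (pow_nonneg hp.1 _))
      (pow_nonneg (by linarith [hp.2]) _)
  linarith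

/-- The probability that `n` independent `Bin(m, p)` variables have maximum at least `k`. -/
lemma sum_filter_le_maxEntry (n : ℕ) {m k : ℕ} (hk : 1 ≤ k) (hkm : k ≤ m) (p : ℝ) :
    ∑ j ∈ univ.filter (fun j : Fin n → Fin (m + 1) => k ≤ maxEntry j),
      ∏ i, ((m.choose (j i) : ℝ) * p ^ (j i : ℕ) * (1 - p) ^ (m - j i)) =
    1 - (1 - p ^ k * (binomialTailQuotient m k).eval p) ^ n := by
  set b : Fin (m + 1) → ℝ := fun i => (m.choose i : ℝ) * p ^ (i : ℕ) * (1 - p) ^ (m - i)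
  have hall : ∑ j : Fin n → Fin (m + 1), ∏ i, b (j i) = 1 := by
    have hb : ∑ i, b i = 1 := by
      rw [Fin.sum_univ_eq_sum_range (fun i => (m.choose i : ℝ) * p ^ i * (1 - p) ^ (m - i)),
        sum_choose_mul_pow_mul_one_sub_pow]
    have := Finset.sum_pow' univ b n
    rw [hb, one_pow, Fintype.piFinset_univ] at this
    exact this.symm
  have hlt : ∑ j ∈ univ.filter (fun j : Fin n → Fin (m + 1) => ¬ k ≤ maxEntry j), ∏ i, b (j i) =
      (1 - p ^ k * (binomialTailQuotient m k).eval p) ^ n := by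
    have hb : ∑ i ∈ univ.filter (fun i : Fin (m + 1) => (i : ℕ) < k), b i =
        1 - p ^ k * (binomialTailQuotient m k).eval p := by
      rw [← sum_range_add_pow_mul_eval_binomialTailQuotient hkm p, add_sub_cancel_right,
        Finset.sum_filter, Fin.sum_univ_eq_sum_range
          (fun i => if i < k then (m.choose i : ℝ) * p ^ i * (1 - p) ^ (m - i) else 0),
        ← Finset.sum_filter]
      refine Finset.sum_congr ?_ fun _ _ => rfl
      ext i
      simp
      omega
    rw [← hb, Finset.sum_pow']
    refine Finset.sum_congr ?_ fun _ _ => rfl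
    ext j
    simp [maxEntry, Finset.sup_lt_iff (show ⊥ < k from hk)]
  rw [eq_sub_iff_add_eq, ← hlt]
  rw [← Finset.sum_filter_add_sum_filter_not univ
    (fun j : Fin n → Fin (m + 1) => k ≤ maxEntry j)] at hall
  exact hall

lemma maxEntry_le {n m : ℕ} (j : Fin n → Fin (m + 1)) : maxEntry j ≤ m :=
  Finset.sup_le fun i _ => Nat.lt_succ_iff.mp (j i).2

lemma maxEntry_eq_zero {n m : ℕ} {j : Fin n → Fin (m + 1)} (h : ∑ i, (j i : ℕ) = 0) :
    maxEntry j = 0 := by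
  rw [Finset.sum_eq_zero_iff] at h
  exact Nat.le_zero.mp (Finset.sup_le fun i hi => (h i hi).le)

lemma sum_val_le {n m : ℕ} (j : Fin n → Fin (m + 1)) : ∑ i, (j i : ℕ) ≤ n * m := by
  simpa using Finset.sum_le_card_nsmul univ (fun i => (j i : ℕ)) m
    fun i _ => Nat.lt_succ_iff.mp (j i).2

lemma S_eq_sum_integral_beta (n m : ℕ) :
    S n m = ∑ j : Fin n → Fin (m + 1), ∫ p in (0 : ℝ)..1,
      (maxEntry j * ∏ i, (m.choose (j i) : ℝ)) *
        (p ^ (∑ i, (j i : ℕ) - 1) * (1 - p) ^ (n * m - ∑ i, (j i : ℕ))) := by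
  have hzero : ∀ j ∈ (univ : Finset (Fin n → Fin (m + 1))),
      j ∉ univ.filter (fun j => ∑ i, (j i : ℕ) ∈ Finset.Icc 1 (n * m)) →
      ∫ p in (0 : ℝ)..1, (maxEntry j * ∏ i, (m.choose (j i) : ℝ)) *
        (p ^ (∑ i, (j i : ℕ) - 1) * (1 - p) ^ (n * m - ∑ i, (j i : ℕ))) = 0 := by
    intro j _ hj
    have h := sum_val_le j
    have h0 : ∑ i, (j i : ℕ) = 0 := by
      simp only [Finset.mem_filter, Finset.mem_univ, true_and, Finset.mem_Icc] at hj
      omega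
    simp [maxEntry_eq_zero h0]
  rw [← Finset.sum_subset (Finset.filter_subset _ _) hzero,
    ← Finset.sum_fiberwise_of_maps_to (t := Finset.Icc 1 (n * m))
      (g := fun j : Fin n → Fin (m + 1) => ∑ i, (j i : ℕ)) (by simp), S]
  refine Finset.sum_congr rfl fun t ht => ?_
  rw [expMaxHyper, Finset.sum_div]
  refine Finset.sum_congr ?_ fun j hj => ?_
  · ext j
    simp only [Finset.mem_filter, Finset.mem_univ, true_and]
    exact ⟨fun h => ⟨h ▸ ht, h⟩, fun h => h.2⟩
  · have hjt := (Finset.mem_filter.mp hj).2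
    rw [Finset.mem_Icc] at ht
    rw [integral_const_mul, hjt, integral_pow_mul_one_sub_pow_eq_inv_choose ht.1 ht.2]
    ring

lemma S_eq_sum_integral (n m : ℕ) :
    S n m = ∑ k ∈ Finset.Icc 1 m, ∫ p in (0 : ℝ)..1,
      p ^ (k - 1) * (binomialTailQuotient m k).eval p *
        ∑ i ∈ range n, (1 - p ^ k * (binomialTailQuotient m k).eval p) ^ i := by
  rw [S_eq_sum_integral_beta, ← integral_finsetSum fun j _ =>
      Continuous.intervalIntegrable (by fun_prop) _ _,
    ← integral_finsetSum fun k _ => Continuous.intervalIntegrable (by fun_prop) _ _]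
  refine integral_congr_Ioo_of_le zero_le_one fun p hp => ?_
  have hp0 : p ≠ 0 := hp.1.ne'
  apply mul_left_cancel₀ hp0
  have hterm : ∀ j : Fin n → Fin (m + 1), p * ((maxEntry j * ∏ i, (m.choose (j i) : ℝ)) *
      (p ^ (∑ i, (j i : ℕ) - 1) * (1 - p) ^ (n * m - ∑ i, (j i : ℕ)))) =
      ∑ k ∈ Finset.Icc 1 m, if k ≤ maxEntry j then
        ∏ i, ((m.choose (j i) : ℝ) * p ^ (j i : ℕ) * (1 - p) ^ (m - j i)) else 0 := by
    intro j
    have hcard : (Finset.Icc 1 m).filter (fun k => k ≤ maxEntry j) = Finset.Icc 1 (maxEntry j) := by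
      have := maxEntry_le j
      ext k
      simp
      omega
    rw [← Finset.sum_filter, hcard, Finset.sum_const, Nat.card_Icc, Nat.add_sub_cancel,
      nsmul_eq_mul]
    rcases Nat.eq_zero_or_pos (∑ i, (j i : ℕ)) with h | h
    · simp [maxEntry_eq_zero h]
    · have hsub : ∑ i, (m - (j i : ℕ)) = n * m - ∑ i, (j i : ℕ) := by
        rw [Finset.sum_tsub_distrib _ fun i _ => Nat.lt_succ_iff.mp (j i).2]
        simp
      rw [Finset.prod_mul_distrib, Finset.prod_mul_distrib, Finset.prod_pow_eq_pow_sum,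
        Finset.prod_pow_eq_pow_sum, hsub, ← Nat.sub_add_cancel h]
      simp only [Nat.add_sub_cancel]
      rw [pow_succ]
      ring
  rw [Finset.mul_sum, Finset.mul_sum, Finset.sum_congr rfl fun j _ => hterm j, Finset.sum_comm]
  refine Finset.sum_congr rfl fun k hk => ?_
  rw [Finset.mem_Icc] at hk
  rw [← Finset.sum_filter, sum_filter_le_maxEntry n hk.1 hk.2]
  have hg := mul_neg_geom_sum (1 - p ^ k * (binomialTailQuotient m k).eval p) n
  rw [← hg, sub_sub_cancel, ← mul_assoc, ← mul_assoc, ← pow_succ', Nat.sub_add_cancel hk.1]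

theorem stmt2 (m : ℕ) (hm : 1 ≤ m) :
    ∃ C > 0, ∀ n : ℕ, 1 ≤ n →
      |S n m - harmonicNum m * harmonicNum n -
          ∑ j ∈ Finset.Icc 1 (m - 1), (1 / (j : ℝ)) * Real.log (Nat.choose m j)| ≤
        C * (n : ℝ) ^ (-(1 : ℝ) / m) := by
  have hmain : ∀ k ∈ Finset.Icc 1 m, ∃ M : ℝ, 0 ≤ M ∧ ∀ n : ℕ,
      |(∫ p in (0 : ℝ)..1, p ^ (k - 1) * (binomialTailQuotient m k).eval p *
          ∑ i ∈ range n, (1 - p ^ k * (binomialTailQuotient m k).eval p) ^ i) -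
        1 / k * harmonicNum n - 1 / k * Real.log (m.choose k)| ≤
      M * ∫ p in (0 : ℝ)..1, (1 - p ^ k) ^ n := by
    intro k hk
    rw [Finset.mem_Icc] at hk
    rw [← eval_zero_binomialTailQuotient]
    exact abs_integral_sub_le _ hk.1 (eval_one_binomialTailQuotient hk.2)
      (fun p hp => one_le_eval_binomialTailQuotient hk.2 hp)
      (fun p hp => pow_mul_eval_binomialTailQuotient_le_one hk.2 hp)
  choose! M hM0 hM using hmain
  have hG : 0 < Real.Gamma (1 / m + 1) := Real.Gamma_pos_of_pos (by positivity)
  have hMs : 0 ≤ ∑ k ∈ Finset.Icc 1 m, M k := Finset.sum_nonneg hM0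
  refine ⟨(∑ k ∈ Finset.Icc 1 m, M k + 1) * Real.Gamma (1 / m + 1), by positivity,
    fun n hn => ?_⟩
  have hlogs : ∑ j ∈ Finset.Icc 1 (m - 1), (1 / (j : ℝ)) * Real.log (m.choose j) =
      ∑ j ∈ Finset.Icc 1 m, (1 / (j : ℝ)) * Real.log (m.choose j) := by
    obtain ⟨l, rfl⟩ := Nat.exists_eq_add_of_le' hm
    rw [Finset.sum_Icc_succ_top (by omega)]
    simp
  rw [hlogs, S_eq_sum_integral, harmonicNum, Finset.sum_mul, ← Finset.sum_sub_distrib,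
    ← Finset.sum_sub_distrib]
  have hpow : ∀ k ∈ Finset.Icc 1 m, ∫ p in (0 : ℝ)..1, (1 - p ^ k) ^ n ≤
      Real.Gamma (1 / m + 1) * (n : ℝ) ^ (-(1 : ℝ) / m) := by
    intro k hk
    refine le_trans (integral_mono_on zero_le_one (Continuous.intervalIntegrable (by fun_prop) _ _)
      (Continuous.intervalIntegrable (by fun_prop) _ _) fun p hp => ?_)
      (integral_one_sub_pow_pow_le hm hn)
    have h1 : p ^ k ≤ 1 := pow_le_one₀ hp.1 hp.2
    have h2 : p ^ m ≤ p ^ k := pow_le_pow_of_le_one hp.1 hp.2 (Finset.mem_Icc.mp hk).2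
    exact pow_le_pow_left₀ (by linarith) (by linarith) n
  calc _ ≤ ∑ k ∈ Finset.Icc 1 m, M k * (Real.Gamma (1 / m + 1) * (n : ℝ) ^ (-(1 : ℝ) / m)) :=
        (Finset.abs_sum_le_sum_abs _ _).trans <| Finset.sum_le_sum fun k hk =>
          (hM k hk n).trans (mul_le_mul_of_nonneg_left (hpow k hk) (hM0 k hk))
    _ ≤ _ := by
        rw [← Finset.sum_mul, mul_assoc]
        gcongr
        linarith
end

section
/- There exist constants K > 0 and C > 0 such that the following holds. Let n ≥ 2 and m ≥ 1 be integers and p ∈ (0,1), and let Y_1,...,Y_n be i.i.d. Binomial(m,p) random variables. Set Z_i = (Y_i − mp)/√(mp(1−p)). If mp(1−p) ≥ K·((ln n)^3 + m^{6/7}), then |E[max_{1≤i≤n} Z_i] − √(2 ln n)| ≤ C. -/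
open Finset

/-- The probability `P(Y = k)` for `Y ~ Binomial(m, p)`. -/
noncomputable def binomPMF (m : ℕ) (p : ℝ) (k : ℕ) : ℝ :=
  (Nat.choose m k : ℝ) * p ^ k * (1 - p) ^ (m - k)

/-- Expected value of `max_i Y_i` for `Y_1, …, Y_n` i.i.d. `Binomial(m, p)`. -/
noncomputable def expMaxBinom (n m : ℕ) (p : ℝ) : ℝ :=
  ∑ j : Fin n → Fin (m + 1), (∏ i, binomPMF m p (j i : ℕ)) * (maxEntry j : ℝ)

lemma binomPMF_nonneg (m : ℕ) {p : ℝ} (h0 : 0 ≤ p) (h1 : p ≤ 1) (k : ℕ) :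
    0 ≤ binomPMF m p k := by
  have : 0 ≤ 1 - p := by linarith
  unfold binomPMF
  positivity

lemma binomPMF_eq_eval (m : ℕ) (p : ℝ) (k : ℕ) :
    binomPMF m p k = (bernsteinPolynomial ℝ m k).eval p := by
  simp [binomPMF, bernsteinPolynomial]

lemma sum_binomPMF (m : ℕ) (p : ℝ) : ∑ k : Fin (m + 1), binomPMF m p k = 1 := by
  rw [← Finset.sum_range (binomPMF m p)]
  have h := congrArg (Polynomial.eval p) (bernsteinPolynomial.sum ℝ m)
  simpa [Polynomial.eval_finsetSum, binomPMF_eq_eval] using h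

lemma sum_binomPMF_mul_sq (m : ℕ) (p : ℝ) :
    ∑ k : Fin (m + 1), binomPMF m p k * ((k : ℝ) - m * p) ^ 2 = m * p * (1 - p) := by
  rw [← Finset.sum_range (fun k : ℕ => binomPMF m p k * ((k : ℝ) - m * p) ^ 2)]
  have h := congrArg (Polynomial.eval p) (bernsteinPolynomial.variance ℝ m)
  simp only [Polynomial.eval_finsetSum, Polynomial.eval_mul, Polynomial.eval_pow,
    Polynomial.eval_sub, nsmul_eq_mul, Polynomial.eval_natCast, Polynomial.eval_X,
    Polynomial.eval_one, ← binomPMF_eq_eval] at h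
  rw [← h]
  exact Finset.sum_congr rfl fun k _ => by ring

lemma sum_binomPMF_mul_exp (m : ℕ) (p s : ℝ) :
    ∑ k : Fin (m + 1), binomPMF m p k * Real.exp (s * ((k : ℝ) - m * p)) =
      (p * Real.exp ((1 - p) * s) + (1 - p) * Real.exp (-(p * s))) ^ m := by
  rw [← Finset.sum_range (fun k : ℕ => binomPMF m p k * Real.exp (s * ((k : ℝ) - m * p))), add_pow]
  refine Finset.sum_congr rfl fun k hk => ?_
  have hk' : k ≤ m := Nat.lt_succ_iff.mp (Finset.mem_range.mp hk)
  have he : Real.exp (s * ((k : ℝ) - m * p)) =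
      Real.exp ((1 - p) * s) ^ k * Real.exp (-(p * s)) ^ (m - k) := by
    rw [← Real.exp_nat_mul, ← Real.exp_nat_mul, ← Real.exp_add, Nat.cast_sub hk']
    congr 1
    ring
  rw [he, mul_pow, mul_pow, binomPMF]
  ring

lemma exp_le_cubic {x : ℝ} (hx : |x| ≤ 1) : Real.exp x ≤ 1 + x + x ^ 2 / 2 + |x| ^ 3 := by
  have h := (abs_le.mp (Real.exp_bound hx (n := 3) (by norm_num))).2
  norm_num [Finset.sum_range_succ, Nat.factorial] at h
  have : 0 ≤ |x| ^ 3 := by positivity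
  linarith

/-- A second-order bound on the moment generating function of a centred Bernoulli variable. -/
lemma bernoulli_mgf_le {p s : ℝ} (h0 : 0 ≤ p) (h1 : p ≤ 1) (hs0 : 0 ≤ s) (hs1 : s ≤ 1) :
    p * Real.exp ((1 - p) * s) + (1 - p) * Real.exp (-(p * s)) ≤
      Real.exp (p * (1 - p) * (s ^ 2 / 2 + s ^ 3)) := by
  have hq : 0 ≤ 1 - p := by linarith
  have ha : |(1 - p) * s| = (1 - p) * s := abs_of_nonneg (by positivity)
  have hb : |-(p * s)| = p * s := by rw [abs_neg]; exact abs_of_nonneg (by positivity)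
  have h2 := exp_le_cubic (x := (1 - p) * s) (by rw [ha]; nlinarith)
  have h3 := exp_le_cubic (x := -(p * s)) (by rw [hb]; nlinarith)
  rw [ha] at h2
  rw [hb] at h3
  have h4 := mul_le_mul_of_nonneg_left h2 h0
  have h5 := mul_le_mul_of_nonneg_left h3 hq
  have h6 := Real.add_one_le_exp (p * (1 - p) * (s ^ 2 / 2 + s ^ 3))
  have h7 : p * (1 - p) * s ^ 3 * ((1 - p) ^ 2 + p ^ 2) ≤ p * (1 - p) * s ^ 3 * 1 :=
    mul_le_mul_of_nonneg_left (by nlinarith) (by positivity)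
  nlinarith

lemma binom_mgf_le (m : ℕ) {p s : ℝ} (h0 : 0 ≤ p) (h1 : p ≤ 1) (hs0 : 0 ≤ s) (hs1 : s ≤ 1) :
    ∑ k : Fin (m + 1), binomPMF m p k * Real.exp (s * ((k : ℝ) - m * p)) ≤
      Real.exp (m * p * (1 - p) * (s ^ 2 / 2 + s ^ 3)) := by
  have hq : 0 ≤ 1 - p := by linarith
  rw [sum_binomPMF_mul_exp]
  refine (pow_le_pow_left₀ (by positivity) (bernoulli_mgf_le h0 h1 hs0 hs1) m).trans_eq ?_
  rw [← Real.exp_nat_mul]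
  congr 1
  ring

lemma sum_prod_binomPMF (n m : ℕ) (p : ℝ) :
    ∑ j : Fin n → Fin (m + 1), ∏ i, binomPMF m p (j i) = 1 := by
  rw [← Fintype.prod_sum (fun (_ : Fin n) (k : Fin (m + 1)) => binomPMF m p k)]
  simp [sum_binomPMF]

/-- The marginal of the product weight in a fixed coordinate is the binomial weight. -/
lemma sum_prod_binomPMF_mul (n m : ℕ) (p : ℝ) (i : Fin n) (f : Fin (m + 1) → ℝ) :
    ∑ j : Fin n → Fin (m + 1), (∏ i, binomPMF m p (j i)) * f (j i) =
      ∑ k : Fin (m + 1), binomPMF m p k * f k := by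
  have h := Fintype.prod_sum
    (fun (l : Fin n) (k : Fin (m + 1)) => binomPMF m p k * if l = i then f k else 1)
  simp only [Finset.prod_mul_distrib, Finset.prod_ite_eq', Finset.mem_univ, if_true] at h
  rw [← h, ← Finset.mul_prod_erase _ _ (Finset.mem_univ i), Finset.prod_eq_one]
  · simp
  · intro l hl
    simp [Finset.ne_of_mem_erase hl, sum_binomPMF]

lemma le_maxEntry {n m : ℕ} (j : Fin n → Fin (m + 1)) (i : Fin n) : (j i : ℕ) ≤ maxEntry j :=
  Finset.le_sup (f := fun i => (j i : ℕ)) (Finset.mem_univ i)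

lemma exists_eq_maxEntry {n m : ℕ} (hn : 0 < n) (j : Fin n → Fin (m + 1)) :
    ∃ i, maxEntry j = j i := by
  have : Nonempty (Fin n) := ⟨⟨0, hn⟩⟩
  obtain ⟨i, -, hi⟩ := Finset.exists_mem_eq_sup Finset.univ Finset.univ_nonempty
    (fun i => (j i : ℕ))
  exact ⟨i, hi⟩

/-- The expected maximum is at most `mp + a / s` once `a` exceeds `log n` plus the cumulant
generating function of the centred binomial at `s`. -/
lemma mul_expMaxBinom_sub_le {n m : ℕ} {p s a : ℝ} (hn : 0 < n) (h0 : 0 ≤ p) (h1 : p ≤ 1)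
    (hs0 : 0 ≤ s) (hs1 : s ≤ 1)
    (ha : Real.log n + m * p * (1 - p) * (s ^ 2 / 2 + s ^ 3) ≤ a) :
    s * (expMaxBinom n m p - m * p) ≤ a := by
  set W : (Fin n → Fin (m + 1)) → ℝ := fun j => ∏ i, binomPMF m p (j i) with hW
  have hW0 : ∀ j, 0 ≤ W j := fun j => Finset.prod_nonneg fun i _ => binomPMF_nonneg m h0 h1 _
  have hW1 : ∑ j, W j = 1 := sum_prod_binomPMF n m p
  have hpt : ∀ j, W j * (s * ((maxEntry j : ℝ) - m * p) - a + 1) ≤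
      ∑ i, Real.exp (-a) * (W j * Real.exp (s * (((j i : ℕ) : ℝ) - m * p))) := by
    intro j
    obtain ⟨i, hi⟩ := exists_eq_maxEntry hn j
    have h2 : Real.exp (s * ((maxEntry j : ℝ) - m * p) - a) =
        Real.exp (-a) * Real.exp (s * (((j i : ℕ) : ℝ) - m * p)) := by
      rw [← Real.exp_add, hi]
      congr 1
      ring
    calc _ ≤ W j * Real.exp (s * ((maxEntry j : ℝ) - m * p) - a) :=
          mul_le_mul_of_nonneg_left (Real.add_one_le_exp _) (hW0 j)
      _ = Real.exp (-a) * (W j * Real.exp (s * (((j i : ℕ) : ℝ) - m * p))) := by rw [h2]; ring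
      _ ≤ _ := Finset.single_le_sum
          (f := fun i => Real.exp (-a) * (W j * Real.exp (s * (((j i : ℕ) : ℝ) - m * p))))
          (fun i _ => mul_nonneg (Real.exp_pos _).le (mul_nonneg (hW0 j) (Real.exp_pos _).le))
          (Finset.mem_univ i)
  have hsum := Finset.sum_le_sum fun j (_ : j ∈ Finset.univ) => hpt j
  have hl : ∑ j, W j * (s * ((maxEntry j : ℝ) - m * p) - a + 1) =
      s * (expMaxBinom n m p - m * p) - a + 1 := by
    have : ∀ j, W j * (s * ((maxEntry j : ℝ) - m * p) - a + 1) =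
        s * (W j * maxEntry j) + (1 - a - s * (m * p)) * W j := fun j => by ring
    simp only [this, Finset.sum_add_distrib, ← Finset.mul_sum, hW1]
    rw [expMaxBinom]
    ring
  have hr : ∑ j, ∑ i, Real.exp (-a) * (W j * Real.exp (s * (((j i : ℕ) : ℝ) - m * p))) ≤ 1 := by
    rw [Finset.sum_comm]
    simp only [← Finset.mul_sum, hW]
    simp only [sum_prod_binomPMF_mul n m p _ fun k => Real.exp (s * (((k : ℕ) : ℝ) - m * p))]
    rw [Finset.sum_const, Finset.card_univ, Fintype.card_fin, nsmul_eq_mul]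
    have hn' : (0 : ℝ) < n := by exact_mod_cast hn
    calc _ ≤ Real.exp (-a) * (n * Real.exp (m * p * (1 - p) * (s ^ 2 / 2 + s ^ 3))) := by
          gcongr
          exact binom_mgf_le m h0 h1 hs0 hs1
      _ = Real.exp (Real.log n + m * p * (1 - p) * (s ^ 2 / 2 + s ^ 3) - a) := by
          rw [Real.exp_sub, Real.exp_add, Real.exp_log hn', Real.exp_neg]
          ring
      _ ≤ 1 := Real.exp_le_one_iff.mpr (by linarith)
  linarith

/-- A lower bound on the expected maximum in terms of `P(Y < mp + y)`. -/
lemma le_expMaxBinom_sub {n m : ℕ} {p σ y : ℝ} (hn : 0 < n) (h0 : 0 ≤ p) (h1 : p ≤ 1)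
    (hσ : 0 < σ) (hV : m * p * (1 - p) = σ ^ 2) :
    y - y * (∑ k : Fin (m + 1), binomPMF m p k * if (k : ℝ) < m * p + y then 1 else 0) ^ n - σ ≤
      expMaxBinom n m p - m * p := by
  set W : (Fin n → Fin (m + 1)) → ℝ := fun j => ∏ i, binomPMF m p (j i) with hW
  have hW0 : ∀ j, 0 ≤ W j := fun j => Finset.prod_nonneg fun i _ => binomPMF_nonneg m h0 h1 _
  have hW1 : ∑ j, W j = 1 := sum_prod_binomPMF n m p
  let i₀ : Fin n := ⟨0, hn⟩
  have hpt : ∀ j, W j * (y - y * (∏ i, if (((j i : ℕ) : ℝ) < m * p + y) then (1 : ℝ) else 0) -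
      (σ / 2 + (((j i₀ : ℕ) : ℝ) - m * p) ^ 2 / (2 * σ))) ≤
      W j * ((maxEntry j : ℝ) - m * p) := by
    intro j
    refine mul_le_mul_of_nonneg_left ?_ (hW0 j)
    have hneg : -(((j i₀ : ℕ) : ℝ) - m * p) ≤
        σ / 2 + (((j i₀ : ℕ) : ℝ) - m * p) ^ 2 / (2 * σ) := by
      have : σ / 2 + (((j i₀ : ℕ) : ℝ) - m * p) ^ 2 / (2 * σ) + (((j i₀ : ℕ) : ℝ) - m * p) =
          (((j i₀ : ℕ) : ℝ) - m * p + σ) ^ 2 / (2 * σ) := by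
        field_simp
        ring
      have : 0 ≤ (((j i₀ : ℕ) : ℝ) - m * p + σ) ^ 2 / (2 * σ) := by positivity
      linarith
    have hpos : 0 ≤ σ / 2 + (((j i₀ : ℕ) : ℝ) - m * p) ^ 2 / (2 * σ) := by positivity
    by_cases hall : ∀ i, ((j i : ℕ) : ℝ) < m * p + y
    · have hm : ((j i₀ : ℕ) : ℝ) ≤ maxEntry j := by exact_mod_cast le_maxEntry j i₀
      rw [Finset.prod_eq_one fun i _ => if_pos (hall i)]
      linarith
    · push Not at hall
      obtain ⟨i, hi⟩ := hall
      have hm : ((j i : ℕ) : ℝ) ≤ maxEntry j := by exact_mod_cast le_maxEntry j i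
      rw [Finset.prod_eq_zero (Finset.mem_univ i) (if_neg (not_lt.mpr hi))]
      linarith
  have hsum := Finset.sum_le_sum fun j (_ : j ∈ Finset.univ) => hpt j
  have hr : ∑ j, W j * ((maxEntry j : ℝ) - m * p) = expMaxBinom n m p - m * p := by
    simp only [mul_sub, Finset.sum_sub_distrib, ← Finset.sum_mul, hW1, one_mul]
    rw [expMaxBinom]
  have hprod : ∑ j, W j * ∏ i, (if (((j i : ℕ) : ℝ) < m * p + y) then (1 : ℝ) else 0) =
      (∑ k : Fin (m + 1), binomPMF m p k * if (k : ℝ) < m * p + y then 1 else 0) ^ n := by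
    simp only [hW, ← Finset.prod_mul_distrib]
    rw [← Fintype.prod_sum (fun (_ : Fin n) (k : Fin (m + 1)) =>
      binomPMF m p k * if (k : ℝ) < m * p + y then 1 else 0)]
    simp
  have hvar : ∑ j, W j * (((j i₀ : ℕ) : ℝ) - m * p) ^ 2 = σ ^ 2 := by
    rw [← hV, ← sum_binomPMF_mul_sq]
    exact sum_prod_binomPMF_mul n m p i₀ fun k => (((k : ℕ) : ℝ) - m * p) ^ 2
  have hl : ∑ j, W j * (y - y * (∏ i, if (((j i : ℕ) : ℝ) < m * p + y) then (1 : ℝ) else 0) -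
      (σ / 2 + (((j i₀ : ℕ) : ℝ) - m * p) ^ 2 / (2 * σ))) =
      y - y * (∑ k : Fin (m + 1), binomPMF m p k * if (k : ℝ) < m * p + y then 1 else 0) ^ n
        - σ := by
    have : ∀ j, W j * (y - y * (∏ i, if (((j i : ℕ) : ℝ) < m * p + y) then (1 : ℝ) else 0) -
        (σ / 2 + (((j i₀ : ℕ) : ℝ) - m * p) ^ 2 / (2 * σ))) = (y - σ / 2) * W j -
        y * (W j * ∏ i, (if (((j i : ℕ) : ℝ) < m * p + y) then (1 : ℝ) else 0)) -
        1 / (2 * σ) * (W j * (((j i₀ : ℕ) : ℝ) - m * p) ^ 2) := fun j => by ring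
    simp only [this, Finset.sum_sub_distrib, ← Finset.mul_sum, hW1, hprod, hvar]
    field_simp
    ring
  linarith

lemma log_one_add_le_cubic {u : ℝ} (h0 : 0 ≤ u) (h1 : u ≤ 1) :
    Real.log (1 + u) ≤ u - u ^ 2 / 2 + u ^ 3 / 2 := by
  have hz : u - u ^ 2 / 2 ≤ u - u ^ 2 / 2 + u ^ 3 / 2 := by
    have : 0 ≤ u ^ 3 := by positivity
    linarith
  have hz0 : 0 ≤ u - u ^ 2 / 2 := by nlinarith
  have h := Real.quadratic_le_exp_of_nonneg (hz0.trans hz)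
  have hsq := pow_le_pow_left₀ hz0 hz 2
  rw [Real.log_le_iff_le_exp (by linarith)]
  have : 0 ≤ u ^ 4 := by positivity
  nlinarith

lemma quadratic_le_neg_log_one_sub {v : ℝ} (h0 : 0 ≤ v) (h1 : v < 1) :
    v + v ^ 2 / 2 ≤ -Real.log (1 - v) := by
  have h := sum_le_hasSum (Finset.range 2) (fun i _ => by positivity)
    (Real.hasSum_pow_div_log_of_abs_lt_one (x := v) (by rwa [abs_of_nonneg h0]))
  norm_num [Finset.sum_range_succ] at h
  linarith

/-- Change of measure from the success probability `p (1 + u)` to `p`, where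
`1 - p (1 + u) = (1 - p) (1 - v)`. -/
lemma binomPMF_tilt_le {m k : ℕ} {p u v : ℝ} (hk : k ≤ m) (hp0 : 0 ≤ p) (hp1 : p ≤ 1)
    (huv : 1 - p * (1 + u) = (1 - p) * (1 - v))
    (hu0 : 0 ≤ u) (hu1 : u ≤ 1) (hv0 : 0 ≤ v) (hv1 : v < 1) :
    binomPMF m (p * (1 + u)) k *
      Real.exp (-(k * (u - u ^ 2 / 2 + u ^ 3 / 2)) + (m - k) * (v + v ^ 2 / 2)) ≤
      binomPMF m p k := by
  have hu : (1 + u) ^ k * Real.exp (-(k * (u - u ^ 2 / 2 + u ^ 3 / 2))) ≤ 1 := by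
    nth_rw 1 [← Real.exp_log (by linarith : 0 < 1 + u)]
    rw [← Real.exp_nat_mul, ← Real.exp_add, Real.exp_le_one_iff]
    have := mul_le_mul_of_nonneg_left (log_one_add_le_cubic hu0 hu1) (Nat.cast_nonneg (α := ℝ) k)
    linarith
  have hv : (1 - v) ^ (m - k) * Real.exp ((m - k) * (v + v ^ 2 / 2)) ≤ 1 := by
    rw [← Nat.cast_sub hk]
    nth_rw 1 [← Real.exp_log (by linarith : 0 < 1 - v)]
    rw [← Real.exp_nat_mul, ← Real.exp_add, Real.exp_le_one_iff]
    have := mul_le_mul_of_nonneg_left (quadratic_le_neg_log_one_sub hv0 hv1)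
      (Nat.cast_nonneg (α := ℝ) (m - k))
    linarith
  have hb := binomPMF_nonneg m hp0 hp1 k
  have hq : 0 ≤ 1 - v := by linarith
  calc _ = binomPMF m p k * (((1 + u) ^ k * Real.exp (-(k * (u - u ^ 2 / 2 + u ^ 3 / 2)))) *
        ((1 - v) ^ (m - k) * Real.exp ((m - k) * (v + v ^ 2 / 2)))) := by
        rw [binomPMF, binomPMF, huv, mul_pow, mul_pow, Real.exp_add]
        ring
    _ ≤ binomPMF m p k * 1 :=
        mul_le_mul_of_nonneg_left (mul_le_one₀ hu (by positivity) hv) hb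
    _ = _ := mul_one _

/-- The exponent of the change of measure, at `k = mp + (x + c) σ` with `|c| ≤ 2`. -/
lemma tilt_exponent_ge {M p σ x c : ℝ} (hp0 : 0 ≤ p) (hp1 : p ≤ 1) (hσ : 0 < σ)
    (hV : M * p * (1 - p) = σ ^ 2) (hx : 0 ≤ x) (hxσ : x ^ 3 ≤ σ) (hx1 : x ≤ σ)
    (hc : |c| ≤ 2) {u v : ℝ} (hu : u = x / σ * (1 - p)) (hv : v = x / σ * p) :
    -(x ^ 2 / 2) - 4 * x - 4 ≤ -((M * p + (x + c) * σ) * (u - u ^ 2 / 2 + u ^ 3 / 2)) +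
      (M - (M * p + (x + c) * σ)) * (v + v ^ 2 / 2) := by
  have hq0 : 0 ≤ 1 - p := by linarith
  obtain ⟨r, hr⟩ : ∃ r, r = x / σ := ⟨_, rfl⟩
  have hxr : x = r * σ := by rw [hr]; field_simp
  have hr0 : 0 ≤ r := hr ▸ by positivity
  have hr1 : r ≤ 1 := by rw [hr, div_le_one hσ]; exact hx1
  rw [← hr] at hu hv
  have hu0 : 0 ≤ u := hu ▸ mul_nonneg hr0 hq0
  have hu1 : u ≤ 1 := hu ▸ mul_le_one₀ hr1 hq0 (by linarith)
  have hcube : x * r ^ 2 * σ ≤ 1 := by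
    have : x * r ^ 2 * σ * σ = x ^ 3 := by rw [hxr]; ring
    refine le_of_mul_le_mul_right ?_ hσ
    rwa [this, one_mul]
  have hsq : r ^ 2 * σ ≤ x := by
    have := mul_le_mul_of_nonneg_right hr1 (mul_nonneg hr0 hσ.le)
    rw [hxr]
    linarith
  have hid : -((M * p + (x + c) * σ) * (u - u ^ 2 / 2 + u ^ 3 / 2)) +
      (M - (M * p + (x + c) * σ)) * (v + v ^ 2 / 2) =
      -(x ^ 2 / 2) - c * x - x * r ^ 2 * σ * (1 - p) ^ 2 / 2 +
        (x + c) * (σ * (u ^ 2 - v ^ 2 - u ^ 3)) / 2 := by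
    have e : -((M * p + (x + c) * σ) * (u - u ^ 2 / 2 + u ^ 3 / 2)) +
        (M - (M * p + (x + c) * σ)) * (v + v ^ 2 / 2) =
        (M * p * (1 - p)) * (r ^ 2 / 2 - r ^ 3 * (1 - p) ^ 2 / 2) - (x + c) * σ * r +
        (x + c) * (σ * (u ^ 2 - v ^ 2 - u ^ 3)) / 2 := by
      rw [hu, hv]; ring
    rw [e, hV, hxr]
    ring
  rw [hid]
  obtain ⟨hc1, hc2⟩ := abs_le.mp hc
  have hA : |σ * (u ^ 2 - v ^ 2 - u ^ 3)| ≤ r ^ 2 * σ := by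
    have hu2 : 0 ≤ u ^ 2 * (1 - u) ∧ u ^ 2 * (1 - u) ≤ r ^ 2 := by
      refine ⟨mul_nonneg (sq_nonneg u) (by linarith), ?_⟩
      have : u ^ 2 ≤ r ^ 2 := pow_le_pow_left₀ hu0 (by rw [hu]; nlinarith) 2
      linarith [mul_nonneg (sq_nonneg u) hu0]
    have hv2 : v ^ 2 ≤ r ^ 2 :=
      pow_le_pow_left₀ (hv ▸ mul_nonneg hr0 hp0) (by rw [hv]; nlinarith) 2
    rw [abs_mul, abs_of_pos hσ, mul_comm]
    refine mul_le_mul_of_nonneg_right (abs_le.mpr ⟨?_, ?_⟩) hσ.le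
    · linarith
    · linarith [sq_nonneg v]
  have hB : |(x + c) * (σ * (u ^ 2 - v ^ 2 - u ^ 3))| ≤ (x + 2) * (r ^ 2 * σ) := by
    rw [abs_mul]
    exact mul_le_mul (abs_le.mpr ⟨by linarith, by linarith⟩) hA (abs_nonneg _) (by linarith)
  have hB' := (abs_le.mp hB).1
  have hcx : c * x ≤ 2 * x := mul_le_mul_of_nonneg_right hc2 hx
  have hq : x * r ^ 2 * σ * (1 - p) ^ 2 ≤ 1 := mul_le_one₀ hcube (sq_nonneg _)
    (pow_le_one₀ hq0 (by linarith))
  have hsplit : (x + 2) * (r ^ 2 * σ) = x * r ^ 2 * σ + 2 * (r ^ 2 * σ) := by ring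
  linarith

/-- A Gaussian-type lower bound on the upper tail of the binomial distribution, stated for the
complementary event. -/
lemma binom_lower_tail_le {m : ℕ} {p σ x : ℝ} (hp0 : 0 < p) (hp1 : p < 1) (hσ : 0 < σ)
    (hV : m * p * (1 - p) = σ ^ 2) (hx : 0 ≤ x) (hxσ : x ^ 3 ≤ σ) (hx1 : x ≤ σ) :
    ∑ k : Fin (m + 1), binomPMF m p k * (if (k : ℝ) < m * p + (x - 2) * σ then 1 else 0) ≤
      1 - Real.exp (-(x ^ 2 / 2) - 4 * x - 4) / 2 := by
  have hq0 : 0 < 1 - p := by linarith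
  have hr0 : 0 ≤ x / σ := by positivity
  have hr1 : x / σ ≤ 1 := (div_le_one hσ).mpr hx1
  obtain ⟨u, hu⟩ : ∃ u, u = x / σ * (1 - p) := ⟨_, rfl⟩
  obtain ⟨v, hv⟩ : ∃ v, v = x / σ * p := ⟨_, rfl⟩
  have hu0 : 0 ≤ u := hu ▸ mul_nonneg hr0 hq0.le
  have hu1 : u ≤ 1 := hu ▸ mul_le_one₀ hr1 hq0.le (by linarith)
  have hv0 : 0 ≤ v := hv ▸ mul_nonneg hr0 hp0.le
  have hv1 : v < 1 := by rw [hv]; nlinarith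
  have huv : 1 - p * (1 + u) = (1 - p) * (1 - v) := by rw [hu, hv]; ring
  set e := Real.exp (-(x ^ 2 / 2) - 4 * x - 4) with he
  have he0 : 0 < e := Real.exp_pos _
  set p' := p * (1 + u) with hp'
  have hp'0 : 0 ≤ p' := by positivity
  have hp'1 : p' ≤ 1 := by nlinarith
  have hmean : m * p' = m * p + x * σ := by
    have : m * p' = m * p + (m * p * (1 - p)) * (x / σ) := by rw [hp', hu]; ring
    rw [this, hV]
    field_simp
  have hvar : m * p' * (1 - p') ≤ 2 * σ ^ 2 := by
    have : m * p' * (1 - p') = σ ^ 2 * ((1 + u) * (1 - v)) := by rw [huv, ← hV, hp']; ring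
    rw [this]
    nlinarith [mul_nonneg hu0 hv0, sq_nonneg σ]
  have hpt : ∀ k : Fin (m + 1),
      binomPMF m p k * (if (k : ℝ) < m * p + (x - 2) * σ then 1 else 0) ≤
      binomPMF m p k - e * (binomPMF m p' k -
        1 / (4 * σ ^ 2) * (binomPMF m p' k * ((k : ℝ) - m * p') ^ 2)) := by
    intro k
    have hb := binomPMF_nonneg m hp0.le hp1.le k
    have hb' := binomPMF_nonneg m hp'0 hp'1 k
    have hk : (k : ℕ) ≤ m := Nat.lt_succ_iff.mp k.2
    obtain ⟨c, hc⟩ : ∃ c : ℝ, c = ((k : ℝ) - m * p') / σ := ⟨_, rfl⟩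
    have hkc : (k : ℝ) = m * p + (x + c) * σ := by
      rw [hc, hmean]; field_simp; ring
    have hrew : binomPMF m p' k - 1 / (4 * σ ^ 2) * (binomPMF m p' k * ((k : ℝ) - m * p') ^ 2) =
        binomPMF m p' k * (1 - c ^ 2 / 4) := by
      rw [hc]; field_simp
    rw [hrew]
    by_cases hc2 : |c| ≤ 2
    · have hn : ¬ (k : ℝ) < m * p + (x - 2) * σ := by
        have := (abs_le.mp hc2).1
        rw [hkc, not_lt]
        gcongr
        linarith
      rw [if_neg hn, mul_zero]
      have ht := binomPMF_tilt_le hk hp0.le hp1.le huv hu0 hu1 hv0 hv1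
      rw [← hp'] at ht
      have hE := tilt_exponent_ge hp0.le hp1.le hσ hV hx hxσ hx1 hc2 hu hv
      rw [← hkc] at hE
      have h1 := mul_le_mul_of_nonneg_left (Real.exp_le_exp.mpr hE) hb'
      have h2 : 0 ≤ e * binomPMF m p' k * c ^ 2 := by positivity
      linarith
    · have hc4 : 4 ≤ c ^ 2 := by
        rw [← sq_abs]; nlinarith [not_le.mp hc2]
      have h1 : 0 ≤ e * (binomPMF m p' k * (c ^ 2 / 4 - 1)) :=
        mul_nonneg he0.le (mul_nonneg hb' (by linarith))
      have h2 : binomPMF m p k * (if (k : ℝ) < m * p + (x - 2) * σ then 1 else 0) ≤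
          binomPMF m p k := mul_le_of_le_one_right hb (by split_ifs <;> norm_num)
      linarith
  refine (Finset.sum_le_sum fun k _ => hpt k).trans ?_
  simp only [Finset.sum_sub_distrib, ← Finset.mul_sum, sum_binomPMF, sum_binomPMF_mul_sq]
  have : 1 / (4 * σ ^ 2) * (m * p' * (1 - p')) ≤ 1 / 2 := by
    rw [div_mul_eq_mul_div, div_le_iff₀ (by positivity)]
    linarith
  have := mul_le_mul_of_nonneg_left this he0.le
  linarith

/-- `log n = t² / 2` with `t³ ≤ σ` gives the lower bound on the expected maximum. -/
lemma sub_le_expMaxBinom_div {n m : ℕ} {p σ t : ℝ} (hn : 0 < n) (hp0 : 0 < p) (hp1 : p < 1)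
    (hσ : 0 < σ) (hV : m * p * (1 - p) = σ ^ 2) (ht : Real.log n = t ^ 2 / 2)
    (htσ : t ^ 3 ≤ σ) (htσ' : t ≤ σ) :
    t - 9 ≤ (expMaxBinom n m p - m * p) / σ := by
  rw [le_div_iff₀ hσ]
  rcases le_or_gt t 7 with h7 | h7
  · have h := le_expMaxBinom_sub (y := 0) hn hp0.le hp1.le hσ hV
    nlinarith
  · have h := le_expMaxBinom_sub (y := (t - 5 - 2) * σ) hn hp0.le hp1.le hσ hV
    have hx3 : (t - 5) ^ 3 ≤ σ := (pow_le_pow_left₀ (by linarith) (by linarith) 3).trans htσ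
    have hQ := binom_lower_tail_le hp0 hp1 hσ hV (x := t - 5) (by linarith) hx3 (by linarith)
    set Q := ∑ k : Fin (m + 1),
      binomPMF m p k * (if (k : ℝ) < m * p + (t - 5 - 2) * σ then 1 else 0) with hQdef
    have hQ0 : 0 ≤ Q := Finset.sum_nonneg fun k _ =>
      mul_nonneg (binomPMF_nonneg m hp0.le hp1.le k) (by split_ifs <;> norm_num)
    set e := Real.exp (-((t - 5) ^ 2 / 2) - 4 * (t - 5) - 4) with he
    have hn' : (0 : ℝ) < n := by exact_mod_cast hn
    have hne : n * e = Real.exp (t + 7 / 2) := by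
      rw [he]
      nth_rw 1 [← Real.exp_log hn']
      rw [← Real.exp_add, ht]
      congr 1
      ring
    have hQn : Q ^ n ≤ Real.exp (-(n * e / 2)) := by
      have h1 : Q ≤ Real.exp (-(e / 2)) := by
        have := Real.add_one_le_exp (-(e / 2))
        linarith
      refine (pow_le_pow_left₀ hQ0 h1 n).trans_eq ?_
      rw [← Real.exp_nat_mul]
      congr 1
      ring
    have hexp : (t - 5 - 2) * Real.exp (-(n * e / 2)) ≤ 1 := by
      rw [Real.exp_neg, ← div_eq_mul_inv, div_le_one (Real.exp_pos _)]
      have h1 := Real.add_one_le_exp (n * e / 2)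
      have h2 := Real.quadratic_le_exp_of_nonneg (x := t + 7 / 2) (by linarith)
      rw [← hne] at h2
      nlinarith
    have hyQ : (t - 5 - 2) * Q ^ n ≤ 1 :=
      (mul_le_mul_of_nonneg_left hQn (by linarith)).trans hexp
    nlinarith

/-- `log n = t² / 2` with `t³ ≤ σ` gives the upper bound on the expected maximum. -/
lemma expMaxBinom_div_le_add {n m : ℕ} {p σ t : ℝ} (hn : 0 < n) (hp0 : 0 < p) (hp1 : p < 1)
    (hσ : 0 < σ) (hV : m * p * (1 - p) = σ ^ 2) (ht1 : 1 ≤ t) (ht : Real.log n = t ^ 2 / 2)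
    (htσ : t ^ 3 ≤ σ) (htσ' : t ≤ σ) :
    (expMaxBinom n m p - m * p) / σ ≤ t + 1 := by
  have hs1 : t / σ ≤ 1 := (div_le_one hσ).mpr htσ'
  have hcube : t ^ 3 / σ ≤ 1 := (div_le_one hσ).mpr htσ
  have h := mul_expMaxBinom_sub_le (a := t ^ 2 + 1) hn hp0.le hp1.le
    (by positivity : 0 ≤ t / σ) hs1 (m := m) (by
      have : σ ^ 2 * ((t / σ) ^ 2 / 2 + (t / σ) ^ 3) = t ^ 2 / 2 + t ^ 3 / σ := by
        field_simp
      rw [hV, ht, this]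
      linarith)
  rw [div_mul_eq_mul_div, mul_div_assoc] at h
  nlinarith

/-- For `Z_i = (Y_i - mp)/√(mp(1-p))` the standardized i.i.d. binomials, one has
`E[max_i Z_i] = (E[max_i Y_i] - mp)/√(mp(1-p))`, and this is `√(2 ln n) + O(1)` provided
`mp(1-p) ≥ K((ln n)³ + m^{6/7})`. -/
theorem stmt5 :
    ∃ K > 0, ∃ C > 0, ∀ (n m : ℕ) (p : ℝ), 2 ≤ n → 1 ≤ m → 0 < p → p < 1 →
      K * ((Real.log n) ^ 3 + (m : ℝ) ^ ((6 : ℝ) / 7)) ≤ m * p * (1 - p) →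
      |(expMaxBinom n m p - m * p) / Real.sqrt (m * p * (1 - p)) -
          Real.sqrt (2 * Real.log n)| ≤ C := by
  refine ⟨8, by norm_num, 9, by norm_num, fun n m p hn hm hp0 hp1 hK => ?_⟩
  have hn' : (2 : ℝ) ≤ n := by exact_mod_cast hn
  have hlog : Real.log 2 ≤ Real.log n := Real.log_le_log (by norm_num) hn'
  have hlog2 := Real.log_two_gt_d9
  have hm1 : 1 ≤ (m : ℝ) ^ ((6 : ℝ) / 7) :=
    Real.one_le_rpow (by exact_mod_cast hm) (by norm_num)
  have hL0 : 0 ≤ Real.log n := by linarith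
  have hL3 : 0 ≤ Real.log n ^ 3 := by positivity
  obtain ⟨σ, hσdef⟩ : ∃ σ, σ = Real.sqrt (m * p * (1 - p)) := ⟨_, rfl⟩
  obtain ⟨t, htdef⟩ : ∃ t, t = Real.sqrt (2 * Real.log n) := ⟨_, rfl⟩
  rw [← hσdef, ← htdef]
  have hV : m * p * (1 - p) = σ ^ 2 := by rw [hσdef, Real.sq_sqrt (by linarith)]
  have ht2 : t ^ 2 = 2 * Real.log n := by rw [htdef, Real.sq_sqrt (by linarith)]
  have ht1 : 1 ≤ t := by rw [htdef, Real.one_le_sqrt]; linarith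
  have hσ0 : 0 ≤ σ := hσdef ▸ Real.sqrt_nonneg _
  have htσ : t ^ 3 ≤ σ := by
    refine (pow_le_pow_iff_left₀ (by positivity) hσ0 two_ne_zero).mp ?_
    have : (t ^ 3) ^ 2 = 8 * Real.log n ^ 3 := by
      rw [← pow_mul, mul_comm, pow_mul, ht2]; ring
    rw [this, ← hV]
    linarith
  have htσ' : t ≤ σ := (le_self_pow₀ ht1 (by norm_num)).trans htσ
  have hσ : 0 < σ := by linarith
  have hlow := sub_le_expMaxBinom_div (by omega : 0 < n) hp0 hp1 hσ hV (by linarith) htσ htσ'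
  have hup := expMaxBinom_div_le_add (by omega : 0 < n) hp0 hp1 hσ hV ht1 (by linarith) htσ htσ'
  exact abs_le.mpr ⟨by linarith, by linarith⟩
end
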